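/- Let k ∈ ℕ, 1 ≤ p ≤ ∞, α, β ∈ J_p, and let f ∈ M^k ∩ W_p^{α,β}. Let T_{k−1}(f, x) := f_−^{(k−1)}(0)·x^{k−1}/(k−1)! + Σ_{i=0}^{k−2} f^{(i)}(0)·x^i/i!, where f_−^{(k−1)}(0) denotes the left (k−1)st derivative of f at 0 (for k = 1 this is the left limit of f at 0); these quantities exist since f is k-monotone. Then there is a constant c > 0, depending only on k, p, α, β, such that ‖w_{α,β}·T_{k−1}(f)‖_p ≤ c·‖w_{α,β}·f‖_p. -/

import Mathlib

open MeasureTheory Set Filter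
open scoped ENNReal

noncomputable section

/-- The Jacobi weight `w_{α,β}(x) = (1+x)^α (1-x)^β`. -/
def jacobi (α β : ℝ) (x : ℝ) : ℝ := (1 + x) ^ α * (1 - x) ^ β

/-- `φ(x) = √(1-x²)`. -/
def phiW (x : ℝ) : ℝ := Real.sqrt (1 - x ^ 2)

/-- The `L^p` norm of `g` on the interval `[a,b]` (essential sup when `p = ∞`). -/
def LpOn (g : ℝ → ℝ) (p : ℝ≥0∞) (a b : ℝ) : ℝ≥0∞ :=
  eLpNorm g p (volume.restrict (Icc a b))

/-- The `k`-th symmetric difference `Δ_h^k(f,x)` relative to `[-1,1]`. -/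
def symmDelta (k : ℕ) (h : ℝ) (f : ℝ → ℝ) (x : ℝ) : ℝ :=
  if (x - k * h / 2 ∈ Icc (-1 : ℝ) 1 ∧ x + k * h / 2 ∈ Icc (-1 : ℝ) 1) then
    ∑ i ∈ Finset.range (k + 1), ((k.choose i : ℝ) * (-1 : ℝ) ^ (k - i) * f (x - k * h / 2 + i * h))
  else 0

/-- Main-part weighted modulus `Ω_φ^k(f,δ)_{w,p}`. -/
def OmegaMain (k : ℕ) (f : ℝ → ℝ) (δ : ℝ) (wt : ℝ → ℝ) (p : ℝ≥0∞) : ℝ≥0∞ :=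
  ⨆ h ∈ Ioc (0 : ℝ) δ,
    LpOn (fun x => wt x * symmDelta k (h * phiW x) f x) p
      (-1 + 2 * (k : ℝ) ^ 2 * h ^ 2) (1 - 2 * (k : ℝ) ^ 2 * h ^ 2)

/-- Forward part `Ω→_φ^k(f,δ)_{w,p}`. -/
def OmegaFwd (k : ℕ) (f : ℝ → ℝ) (δ : ℝ) (wt : ℝ → ℝ) (p : ℝ≥0∞) : ℝ≥0∞ :=
  ⨆ h ∈ Ioc (0 : ℝ) (2 * (k : ℝ) ^ 2 * δ ^ 2),
    LpOn (fun x => wt x * symmDelta k h f (x + k * h / 2)) p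
      (-1) (-1 + 2 * (k : ℝ) ^ 2 * δ ^ 2)

/-- Backward part `Ω←_φ^k(f,δ)_{w,p}`. -/
def OmegaBwd (k : ℕ) (f : ℝ → ℝ) (δ : ℝ) (wt : ℝ → ℝ) (p : ℝ≥0∞) : ℝ≥0∞ :=
  ⨆ h ∈ Ioc (0 : ℝ) (2 * (k : ℝ) ^ 2 * δ ^ 2),
    LpOn (fun x => wt x * symmDelta k h f (x - k * h / 2)) p
      (1 - 2 * (k : ℝ) ^ 2 * δ ^ 2) 1

/-- Weighted Ditzian–Totik modulus `ω_φ^k(f,δ)_{w,p}`. -/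
def omegaDT (k : ℕ) (f : ℝ → ℝ) (δ : ℝ) (wt : ℝ → ℝ) (p : ℝ≥0∞) : ℝ≥0∞ :=
  OmegaMain k f δ wt p + OmegaFwd k f δ wt p + OmegaBwd k f δ wt p

/-- `f` is `k`-monotone on `(-1,1)`: all `k`-th divided differences over `k+1` distinct
points of `(-1,1)` are nonnegative. -/
def kMonotoneOn (k : ℕ) (f : ℝ → ℝ) : Prop :=
  ∀ x : Fin (k + 1) → ℝ, Function.Injective x → (∀ i, x i ∈ Ioo (-1 : ℝ) 1) →
    0 ≤ ∑ i, f (x i) / ∏ j ∈ Finset.univ.erase i, (x i - x j)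

/-- `M^k`, the class of `k`-monotone functions on `(-1,1)`. -/
def MSet (k : ℕ) : Set (ℝ → ℝ) := {f | kMonotoneOn k f}

/-- `M_+^k`, the `k`-monotone functions on `(-1,1)` vanishing on `(-1,0]`. -/
def MPlus (k : ℕ) : Set (ℝ → ℝ) :=
  {f | kMonotoneOn k f ∧ ∀ x : ℝ, -1 < x → x ≤ 0 → f x = 0}

/-- `J_p = (-1/p, ∞)` for finite `p`, `[0,∞)` for `p = ∞`. -/
def Jset (p : ℝ≥0∞) : Set ℝ := if p = ∞ then Ici 0 else Ioi (-1 / p.toReal)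

/-- `W_p^{α,β}`. -/
def WSet (p : ℝ≥0∞) (α β : ℝ) : Set (ℝ → ℝ) :=
  {f | Measurable f ∧ LpOn (fun x => jacobi α β x * f x) p (-1) 1 ≠ ⊤}

/-- `B_p^{α,β}`, the unit sphere of `W_p^{α,β}`. -/
def BSet (p : ℝ≥0∞) (α β : ℝ) : Set (ℝ → ℝ) :=
  {f | Measurable f ∧ LpOn (fun x => jacobi α β x * f x) p (-1) 1 = 1}

/-- Best weighted approximation `E_n(f)_{w,q}` by polynomials of degree at most `n`. -/
def En (n : ℕ) (f : ℝ → ℝ) (wt : ℝ → ℝ) (q : ℝ≥0∞) : ℝ≥0∞ :=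
  ⨅ P ∈ {P : Polynomial ℝ | P.natDegree ≤ n},
    LpOn (fun x => wt x * (f x - P.eval x)) q (-1) 1

/-- `E(X, P_n)_{w,q}`. -/
def EClass (X : Set (ℝ → ℝ)) (n : ℕ) (wt : ℝ → ℝ) (q : ℝ≥0∞) : ℝ≥0∞ :=
  ⨆ f ∈ X, En n f wt q

open scoped Topology

/-!
The divided differences of order `k - 1` of a `k`-monotone function `f` increase with the nodes, so
on an inner interval they are trapped between one over nodes near `-1` and one over nodes near `1`.
Every subinterval of `(-1, 1)` contains points where `|f| ≤ c ‖w f‖_p`, so the two trapping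
divided differences can be chosen of size `O(‖w f‖_p)`. Moving nodes one at a time into such
controlled positions then bounds the divided differences of all lower orders. Those of order `i`
control `f^(i)(0) / i!`, hence `|T_{k-1}(f)| ≤ C ‖w f‖_p` on `[-1, 1]`, and `w ∈ L^p` concludes.
-/

section DividedDifference

variable {𝕜 : Type*} [Field 𝕜]

lemma coeff_mul_basisDivisor {P : Polynomial 𝕜} {n : ℕ} (hP : P.degree < (n + 1 : ℕ)) (x y : 𝕜) :
    (P * Lagrange.basisDivisor x y).coeff (n + 1) = (x - y)⁻¹ * P.coeff n := by
  have hcoeff : P.coeff (n + 1) = 0 := Polynomial.coeff_eq_zero_of_degree_lt hP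
  rw [Lagrange.basisDivisor, mul_left_comm, Polynomial.coeff_C_mul, Polynomial.coeff_mul_X_sub_C,
    hcoeff, zero_mul, sub_zero]

variable [DecidableEq 𝕜]

/-- The divided difference `[x₀, …, xₙ; f]` at the `n + 1` elements of the finset `s`, in its
symmetric form; keeping the nodes in a finset builds in that they are distinct and unordered. -/
def dividedDiff (f : 𝕜 → 𝕜) (s : Finset 𝕜) : 𝕜 :=
  ∑ x ∈ s, f x / ∏ y ∈ s.erase x, (x - y)

lemma dividedDiff_singleton (f : 𝕜 → 𝕜) (x : 𝕜) : dividedDiff f {x} = f x := by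
  simp [dividedDiff]

lemma dividedDiff_const_mul (c : 𝕜) (f : 𝕜 → 𝕜) (s : Finset 𝕜) :
    dividedDiff (fun x => c * f x) s = c * dividedDiff f s := by
  simp only [dividedDiff, Finset.mul_sum, mul_div_assoc]

lemma dividedDiff_image_add_right (f : 𝕜 → 𝕜) (s : Finset 𝕜) (h : 𝕜) :
    dividedDiff f (s.image (· + h)) = dividedDiff (fun x => f (x + h)) s := by
  have hinj : Function.Injective (· + h) := add_left_injective h
  simp only [dividedDiff, Finset.sum_image hinj.injOn, ← Finset.image_erase hinj,
    Finset.prod_image hinj.injOn, add_sub_add_right_eq_sub]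

lemma dividedDiff_eq_coeff_interpolate (f : 𝕜 → 𝕜) (s : Finset 𝕜) :
    dividedDiff f s = (Lagrange.interpolate s id f).coeff (s.card - 1) := by
  have hinj : Set.InjOn id (s : Set 𝕜) := Function.injective_id.injOn
  rw [Lagrange.coeff_eq_sum hinj (Lagrange.degree_interpolate_lt f hinj)]
  exact Finset.sum_congr rfl fun x hx => by
    rw [Lagrange.eval_interpolate_at_node f hinj hx]; rfl

lemma dividedDiff_insert_sub_dividedDiff_insert (f : 𝕜 → 𝕜) {s : Finset 𝕜} {a b : 𝕜}
    (ha : a ∉ s) (hb : b ∉ s) (hab : a ≠ b) :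
    dividedDiff f (insert b s) - dividedDiff f (insert a s) =
      (b - a) * dividedDiff f (insert a (insert b s)) := by
  have ha' : a ∉ insert b s := by simp [ha, hab]
  have hb' : b ∉ insert a s := by simp [hb, hab.symm]
  have hdeg {x : 𝕜} (hx : x ∉ s) :
      (Lagrange.interpolate (insert x s) id f).degree < (s.card + 1 : ℕ) :=
    Finset.card_insert_of_notMem hx ▸ Lagrange.degree_interpolate_lt f Function.injective_id.injOn
  have hba : b - a ≠ 0 := sub_ne_zero.2 hab.symm
  have hinj : Set.InjOn id ((insert a (insert b s) : Finset 𝕜) : Set 𝕜) :=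
    Function.injective_id.injOn
  have hrec := Lagrange.interpolate_eq_add_interpolate_erase f hinj
    (Finset.mem_insert_self a _) (Finset.mem_insert_of_mem (Finset.mem_insert_self b s)) hab
  rw [Finset.erase_insert ha', Finset.insert_comm, Finset.erase_insert hb'] at hrec
  simp only [dividedDiff_eq_coeff_interpolate, Finset.card_insert_of_notMem ha',
    Finset.card_insert_of_notMem ha, Finset.card_insert_of_notMem hb, Nat.add_sub_cancel]
  rw [Finset.insert_comm, hrec, Polynomial.coeff_add, coeff_mul_basisDivisor (hdeg ha),
    coeff_mul_basisDivisor (hdeg hb), id, id, ← neg_sub b a]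
  field_simp
  ring

lemma dividedDiff_pair (f : 𝕜 → 𝕜) {a b : 𝕜} (hab : a ≠ b) :
    dividedDiff f {b, a} = slope f a b := by
  have hrec := dividedDiff_insert_sub_dividedDiff_insert f (Finset.notMem_empty a)
    (Finset.notMem_empty b) hab
  simp only [insert_empty_eq, dividedDiff_singleton] at hrec
  rw [Finset.pair_comm, slope_def_field, hrec, mul_div_cancel_left₀ _ (sub_ne_zero.2 hab.symm)]

lemma slope_sub_slope (f : 𝕜 → 𝕜) {x y z : 𝕜} (hy : y ≠ x) (hz : z ≠ x) (hyz : y ≠ z) :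
    slope f x y - slope f x z = (y - z) * dividedDiff f {z, y, x} := by
  rw [← dividedDiff_pair f hy.symm, ← dividedDiff_pair f hz.symm]
  exact dividedDiff_insert_sub_dividedDiff_insert f (by simpa using hz) (by simpa using hy) hyz.symm

lemma exists_dividedDiff_move_node_sub_eq (f : 𝕜 → 𝕜) {e : 𝕜 → 𝕜} {s t : Finset 𝕜} {x : 𝕜}
    (he : Set.InjOn e s) (hdisj : Disjoint s (s.image e)) (ht : insert x t ⊆ s) (hx : x ∉ t) :
    ∃ u ⊆ s ∪ s.image e, u.card = s.card + 1 ∧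
      dividedDiff f (s \ insert x t ∪ (insert x t).image e) - dividedDiff f (s \ t ∪ t.image e) =
        (e x - x) * dividedDiff f u := by
  obtain ⟨hxs, hts⟩ := Finset.insert_subset_iff.1 ht
  have hes {y z : 𝕜} (hy : y ∈ s) (hz : z ∈ s) : e y ≠ z := fun h =>
    Finset.disjoint_left.1 hdisj hz (h ▸ Finset.mem_image_of_mem e hy)
  set v := s \ insert x t ∪ t.image e with hv
  have hxv : x ∉ v := by
    simp only [hv, Finset.mem_union, Finset.mem_sdiff, Finset.mem_insert_self, Finset.mem_image]
    rintro (⟨-, h⟩ | ⟨y, hy, h⟩)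
    exacts [h trivial, hes (hts hy) hxs h]
  have hexv : e x ∉ v := by
    simp only [hv, Finset.mem_union, Finset.mem_sdiff, Finset.mem_image]
    rintro (⟨h, -⟩ | ⟨y, hy, h⟩)
    exacts [hes hxs h rfl, hx (he (hts hy) hxs h ▸ hy)]
  have hcard : v.card + 1 = s.card := by
    have himage : (t.image e).card = t.card := Finset.card_image_of_injOn (he.mono hts)
    have hle := Finset.card_le_card ht
    rw [hv, Finset.card_union_of_disjoint, Finset.card_sdiff_of_subset ht, himage,
      Finset.card_insert_of_notMem hx] at *
    · omega
    · exact hdisj.mono Finset.sdiff_subset (Finset.image_subset_image hts)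
  have hold : s \ t ∪ t.image e = insert x v := by grind
  have hnew : s \ insert x t ∪ (insert x t).image e = insert (e x) v := by grind
  refine ⟨insert x (insert (e x) v), by grind, ?_, ?_⟩
  · rw [Finset.card_insert_of_notMem (by simp [hxv, (hes hxs hxs).symm]),
      Finset.card_insert_of_notMem hexv, hcard]
  · rw [hold, hnew]
    exact dividedDiff_insert_sub_dividedDiff_insert f hxv hexv (hes hxs hxs).symm

-- Telescoping: the nodes are moved from `x` to `e x` one at a time.
lemma exists_dividedDiff_image_sub_eq_sum (f : 𝕜 → 𝕜) {e : 𝕜 → 𝕜} {s : Finset 𝕜}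
    (he : Set.InjOn e s) (hdisj : Disjoint s (s.image e)) :
    ∃ u : 𝕜 → Finset 𝕜, (∀ x ∈ s, u x ⊆ s ∪ s.image e ∧ (u x).card = s.card + 1) ∧
      dividedDiff f (s.image e) - dividedDiff f s = ∑ x ∈ s, (e x - x) * dividedDiff f (u x) := by
  suffices hpartial : ∀ t ⊆ s, ∃ u : 𝕜 → Finset 𝕜,
      (∀ x ∈ t, u x ⊆ s ∪ s.image e ∧ (u x).card = s.card + 1) ∧
      dividedDiff f (s \ t ∪ t.image e) - dividedDiff f s =
        ∑ x ∈ t, (e x - x) * dividedDiff f (u x) by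
    simpa only [Finset.sdiff_self, Finset.empty_union] using hpartial s subset_rfl
  intro t
  induction t using Finset.induction_on with
  | empty => simp
  | insert x t hx ih =>
    intro ht
    obtain ⟨u, hu, hsum⟩ := ih ((Finset.subset_insert x t).trans ht)
    obtain ⟨v, hv, hvcard, hmove⟩ := exists_dividedDiff_move_node_sub_eq f he hdisj ht hx
    have hne {y : 𝕜} (hy : y ∈ t) : y ≠ x := fun h => hx (h ▸ hy)
    refine ⟨Function.update u x v, fun y hy => ?_, ?_⟩
    · rcases Finset.mem_insert.1 hy with rfl | hy
      · simpa using ⟨hv, hvcard⟩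
      · simpa [hne hy] using hu y hy
    · rw [Finset.sum_insert hx, Function.update_self,
        Finset.sum_congr rfl fun y hy => by rw [Function.update_of_ne (hne hy)],
        ← hmove, ← hsum, sub_add_sub_cancel]

end DividedDifference

/-- All divided differences of order `n` (that is, over `n + 1` nodes) of `f` with nodes in `I`
are nonnegative: `f` is `n`-monotone on `I`. -/
def DividedDiffNonnegOn (n : ℕ) (f : ℝ → ℝ) (I : Set ℝ) : Prop :=
  ∀ s : Finset ℝ, ↑s ⊆ I → s.card = n + 1 → 0 ≤ dividedDiff f s

/-- All divided differences of order `n` (that is, over `n + 1` nodes) of `f` with nodes in `I`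
are at most `K` in absolute value. For `n = 0` this bounds `f` itself, for `n = 1` its Lipschitz
constant. -/
def DividedDiffBoundedOn (n : ℕ) (f : ℝ → ℝ) (I : Set ℝ) (K : ℝ) : Prop :=
  ∀ s : Finset ℝ, ↑s ⊆ I → s.card = n + 1 → |dividedDiff f s| ≤ K

section Monotonicity

variable {f : ℝ → ℝ} {I : Set ℝ} {K : ℝ} {n : ℕ}

lemma kMonotoneOn.dividedDiffNonnegOn (hf : kMonotoneOn n f) :
    DividedDiffNonnegOn n f (Ioo (-1) 1) := by
  intro s hsI hs
  let e := s.orderEmbOfFin hs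
  have hnonneg := hf e e.injective fun i => hsI (s.orderEmbOfFin_mem hs i)
  have himage : Finset.univ.image e = s := Finset.image_orderEmbOfFin_univ s hs
  refine hnonneg.trans_eq ?_
  rw [← himage, dividedDiff, Finset.sum_image e.injective.injOn]
  simp only [← Finset.image_erase e.injective, Finset.prod_image e.injective.injOn]

lemma DividedDiffNonnegOn.const_mul (hf : DividedDiffNonnegOn n f I) {c : ℝ} (hc : 0 ≤ c) :
    DividedDiffNonnegOn n (fun x => c * f x) I := fun s hsI hs => by
  rw [dividedDiff_const_mul]
  exact mul_nonneg hc (hf s hsI hs)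

lemma exists_injOn_image_eq {α β : Type*} [Nonempty β] [DecidableEq β] {s : Finset α}
    {t : Finset β} (h : s.card = t.card) : ∃ e : α → β, Set.InjOn e s ∧ s.image e = t := by
  obtain ⟨e, he⟩ := s.finite_toSet.exists_bijOn_of_encard_eq (t := (t : Set β)) (by simp [h])
  exact ⟨e, he.injOn, by exact_mod_cast he.image_eq⟩

lemma disjoint_of_forall_lt {α : Type*} [Preorder α] {s t : Finset α}
    (hst : ∀ x ∈ s, ∀ y ∈ t, x < y) : Disjoint s t :=
  Finset.disjoint_left.2 fun x hs ht => (hst x hs x ht).false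

lemma DividedDiffNonnegOn.dividedDiff_le_dividedDiff (hf : DividedDiffNonnegOn n f I)
    {s t : Finset ℝ} (hsI : ↑s ⊆ I) (htI : ↑t ⊆ I) (hs : s.card = n) (ht : t.card = n)
    (hst : ∀ x ∈ s, ∀ y ∈ t, x < y) : dividedDiff f s ≤ dividedDiff f t := by
  obtain ⟨e, he, rfl⟩ := exists_injOn_image_eq (hs.trans ht.symm)
  obtain ⟨u, hu, hsum⟩ := exists_dividedDiff_image_sub_eq_sum f he (disjoint_of_forall_lt hst)
  rw [← sub_nonneg, hsum]
  refine Finset.sum_nonneg fun x hx => mul_nonneg ?_ (hf (u x) ?_ ?_)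
  · exact sub_nonneg.2 (hst x hx (e x) (Finset.mem_image_of_mem e hx)).le
  · exact (Finset.coe_subset.2 (hu x hx).1).trans
      (by simpa only [Finset.coe_union] using union_subset hsI htI)
  · rw [(hu x hx).2, hs]

lemma DividedDiffBoundedOn.abs_dividedDiff_image_sub_le (hf : DividedDiffBoundedOn (n + 1) f I K)
    {e : ℝ → ℝ} {s : Finset ℝ} {d : ℝ} (he : Set.InjOn e s) (hdisj : Disjoint s (s.image e))
    (hsI : ↑s ⊆ I) (heI : ↑(s.image e) ⊆ I) (hs : s.card = n + 1) (hd : ∀ x ∈ s, |e x - x| ≤ d) :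
    |dividedDiff f (s.image e) - dividedDiff f s| ≤ (n + 1) * (d * K) := by
  obtain ⟨u, hu, hsum⟩ := exists_dividedDiff_image_sub_eq_sum f he hdisj
  have huK : ∀ x ∈ s, |dividedDiff f (u x)| ≤ K := fun x hx =>
    hf (u x) ((Finset.coe_subset.2 (hu x hx).1).trans
      (by simpa only [Finset.coe_union] using union_subset hsI heI)) (by rw [(hu x hx).2, hs])
  calc |dividedDiff f (s.image e) - dividedDiff f s|
      = |∑ x ∈ s, (e x - x) * dividedDiff f (u x)| := by rw [hsum]
    _ ≤ ∑ x ∈ s, |(e x - x) * dividedDiff f (u x)| := Finset.abs_sum_le_sum_abs _ _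
    _ ≤ ∑ _x ∈ s, d * K := Finset.sum_le_sum fun x hx => by
        rw [abs_mul]
        exact mul_le_mul (hd x hx) (huK x hx) (abs_nonneg _) ((abs_nonneg _).trans (hd x hx))
    _ = (n + 1) * (d * K) := by simp [hs]

lemma DividedDiffNonnegOn.dividedDiffBoundedOn {lo a b hi : ℝ} {s t : Finset ℝ}
    (hf : DividedDiffNonnegOn (n + 1) f (Ioo lo hi)) (ha : lo < a) (hab : a < b) (hb : b < hi)
    (hs : ↑s ⊆ Ioo lo a) (ht : ↑t ⊆ Ioo b hi) (hscard : s.card = n + 1) (htcard : t.card = n + 1)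
    (hsK : |dividedDiff f s| ≤ K) (htK : |dividedDiff f t| ≤ K) :
    DividedDiffBoundedOn n f (Ioo a b) K := by
  intro r hr hrcard
  have hsI : ↑s ⊆ Ioo lo hi := hs.trans (Ioo_subset_Ioo_right (hab.trans hb).le)
  have htI : ↑t ⊆ Ioo lo hi := ht.trans (Ioo_subset_Ioo_left (ha.trans hab).le)
  have hrI : ↑r ⊆ Ioo lo hi := hr.trans (Ioo_subset_Ioo ha.le hb.le)
  have hsr : dividedDiff f s ≤ dividedDiff f r :=
    hf.dividedDiff_le_dividedDiff hsI hrI hscard hrcard fun _ hx _ hy => (hs hx).2.trans (hr hy).1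
  have hrt : dividedDiff f r ≤ dividedDiff f t :=
    hf.dividedDiff_le_dividedDiff hrI htI hrcard htcard fun _ hx _ hy => (hr hx).2.trans (ht hy).1
  exact abs_le.2 ⟨(neg_le_of_abs_le hsK).trans hsr, hrt.trans (le_of_abs_le htK)⟩

lemma DividedDiffBoundedOn.of_succ {a b c B : ℝ} {t : Finset ℝ}
    (hf : DividedDiffBoundedOn (n + 1) f (Ioo a c) K) (hab : a < b) (hbc : b < c)
    (ht : ↑t ⊆ Ioo b c) (htcard : t.card = n + 1) (htB : |dividedDiff f t| ≤ B) :
    DividedDiffBoundedOn n f (Ioo a b) (B + (n + 1) * ((c - a) * K)) := by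
  intro s hs hscard
  have hst : ∀ x ∈ s, ∀ y ∈ t, x < y := fun _ hx _ hy => (hs hx).2.trans (ht hy).1
  have hsI : ↑s ⊆ Ioo a c := hs.trans (Ioo_subset_Ioo_right hbc.le)
  have htI : ↑t ⊆ Ioo a c := ht.trans (Ioo_subset_Ioo_left hab.le)
  obtain ⟨e, he, rfl⟩ := exists_injOn_image_eq (hscard.trans htcard.symm)
  have hmove := hf.abs_dividedDiff_image_sub_le he (disjoint_of_forall_lt hst) hsI htI hscard
    fun x hx => Real.dist_le_of_mem_Icc
      (Ioo_subset_Icc_self (htI (Finset.mem_image_of_mem e hx))) (Ioo_subset_Icc_self (hsI hx))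
  rw [abs_sub_comm] at hmove
  linarith [abs_sub_abs_le_abs_sub (dividedDiff f s) (dividedDiff f (s.image e))]

end Monotonicity

lemma abs_dividedDiff_le {f : ℝ → ℝ} {s : Finset ℝ} {δ B : ℝ} (hδ : 0 < δ)
    (hsep : (s : Set ℝ).Pairwise fun x y => δ ≤ |x - y|) (hB : ∀ x ∈ s, |f x| ≤ B) :
    |dividedDiff f s| ≤ s.card * (B / δ ^ (s.card - 1)) := by
  have hterm : ∀ x ∈ s, |f x / ∏ y ∈ s.erase x, (x - y)| ≤ B / δ ^ (s.card - 1) := fun x hx => by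
    have hprod : δ ^ (s.card - 1) ≤ ∏ y ∈ s.erase x, |x - y| := by
      rw [← Finset.card_erase_of_mem hx, ← Finset.prod_const]
      exact Finset.prod_le_prod (fun _ _ => hδ.le) fun y hy =>
        hsep hx (Finset.mem_of_mem_erase hy) (Finset.ne_of_mem_erase hy).symm
    rw [abs_div, Finset.abs_prod]
    exact div_le_div₀ ((abs_nonneg _).trans (hB x hx)) (hB x hx) (by positivity) hprod
  calc |dividedDiff f s|
      ≤ ∑ x ∈ s, |f x / ∏ y ∈ s.erase x, (x - y)| := Finset.abs_sum_le_sum_abs _ _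
    _ ≤ ∑ _x ∈ s, B / δ ^ (s.card - 1) := Finset.sum_le_sum hterm
    _ = s.card * (B / δ ^ (s.card - 1)) := by rw [Finset.sum_const, nsmul_eq_mul]

section Family

/-- Every open subinterval of `I` has a constant `c` such that each `f ∈ 𝓕` satisfies `|f x| ≤ c`
at some point `x` of the subinterval, which may depend on `f`. This is what a bound on weighted
`L^p` norms says about point values. -/
def UniformlyBoundedSomewhere (𝓕 : Set (ℝ → ℝ)) (I : Set ℝ) : Prop :=
  ∀ u v, u < v → Ioo u v ⊆ I → ∃ c, ∀ f ∈ 𝓕, ∃ x ∈ Ioo u v, |f x| ≤ c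

variable {𝓕 : Set (ℝ → ℝ)} {I : Set ℝ}

lemma UniformlyBoundedSomewhere.exists_separated (h : UniformlyBoundedSomewhere 𝓕 I) (n : ℕ)
    {u v : ℝ} (huv : u < v) (hI : Ioo u v ⊆ I) :
    ∃ δ > 0, ∃ B, ∀ f ∈ 𝓕, ∃ s : Finset ℝ, ↑s ⊆ Ioo u v ∧ s.card = n ∧
      (s : Set ℝ).Pairwise (fun x y => δ ≤ |x - y|) ∧ ∀ x ∈ s, |f x| ≤ B := by
  induction n generalizing v with
  | zero => exact ⟨1, one_pos, 0, fun f _ => ⟨∅, by simp⟩⟩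
  | succ n ih =>
    obtain ⟨m, hum, hmv⟩ := exists_between huv
    obtain ⟨m', hmm', hmv'⟩ := exists_between hmv
    have hleft : Ioo u m ⊆ Ioo u v := Ioo_subset_Ioo_right hmv.le
    have hright : Ioo m' v ⊆ Ioo u v := Ioo_subset_Ioo_left (hum.trans hmm').le
    obtain ⟨δ, hδ, B, hB⟩ := ih hum (hleft.trans hI)
    obtain ⟨c, hc⟩ := h m' v hmv' (hright.trans hI)
    refine ⟨min δ (m' - m), lt_min hδ (sub_pos.2 hmm'), max B c, fun f hf => ?_⟩
    obtain ⟨s, hsI, hscard, hsep, hsB⟩ := hB f hf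
    obtain ⟨x, hx, hxc⟩ := hc f hf
    have hgap : ∀ y ∈ s, m' - m ≤ x - y := fun y hy => sub_le_sub hx.1.le (hsI hy).2.le
    have hxs : x ∉ s := fun hxs => by linarith [hgap x hxs]
    refine ⟨insert x s, ?_, by rw [Finset.card_insert_of_notMem hxs, hscard], ?_, ?_⟩
    · rw [Finset.coe_insert]
      exact insert_subset (hright hx) (hsI.trans hleft)
    · rw [Finset.coe_insert]
      refine (hsep.mono' fun _ _ => min_le_of_left_le).insert fun y hy _ => ?_
      rw [abs_sub_comm y x, and_self]
      exact min_le_of_right_le ((hgap y hy).trans (le_abs_self _))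
    · exact Finset.forall_mem_insert .. |>.2
        ⟨hxc.trans (le_max_right B c), fun y hy => (hsB y hy).trans (le_max_left B c)⟩

lemma UniformlyBoundedSomewhere.exists_abs_dividedDiff_le (h : UniformlyBoundedSomewhere 𝓕 I)
    (n : ℕ) {u v : ℝ} (huv : u < v) (hI : Ioo u v ⊆ I) :
    ∃ K, ∀ f ∈ 𝓕, ∃ s : Finset ℝ, ↑s ⊆ Ioo u v ∧ s.card = n + 1 ∧ |dividedDiff f s| ≤ K := by
  obtain ⟨δ, hδ, B, hB⟩ := h.exists_separated (n + 1) huv hI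
  refine ⟨(n + 1 : ℕ) * (B / δ ^ n), fun f hf => ?_⟩
  obtain ⟨s, hsI, hscard, hsep, hsB⟩ := hB f hf
  exact ⟨s, hsI, hscard, by
    simpa only [hscard, Nat.add_sub_cancel] using abs_dividedDiff_le hδ hsep hsB⟩

variable {lo hi : ℝ}

lemma UniformlyBoundedSomewhere.exists_dividedDiffBoundedOn_of_add
    (h : UniformlyBoundedSomewhere 𝓕 (Ioo lo hi)) {n d : ℕ}
    (hmono : ∀ f ∈ 𝓕, DividedDiffNonnegOn (n + d + 1) f (Ioo lo hi)) {a b : ℝ} (ha : lo < a)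
    (hab : a < b) (hb : b < hi) : ∃ K, ∀ f ∈ 𝓕, DividedDiffBoundedOn n f (Ioo a b) K := by
  induction d generalizing n b with
  | zero =>
    obtain ⟨K, hK⟩ := h.exists_abs_dividedDiff_le n ha (Ioo_subset_Ioo_right (hab.trans hb).le)
    obtain ⟨K', hK'⟩ := h.exists_abs_dividedDiff_le n hb (Ioo_subset_Ioo_left (ha.trans hab).le)
    refine ⟨max K K', fun f hf => ?_⟩
    obtain ⟨s, hs, hscard, hsK⟩ := hK f hf
    obtain ⟨t, ht, htcard, htK⟩ := hK' f hf
    exact (hmono f hf).dividedDiffBoundedOn ha hab hb hs ht hscard htcard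
      (hsK.trans (le_max_left K K')) (htK.trans (le_max_right K K'))
  | succ d ih =>
    obtain ⟨c, hbc, hc⟩ := exists_between hb
    obtain ⟨K, hK⟩ := ih (n := n + 1) (by simpa only [add_assoc, add_comm 1 d] using hmono)
      (hab.trans hbc) hc
    obtain ⟨B, hB⟩ := h.exists_abs_dividedDiff_le n hbc
      (Ioo_subset_Ioo (ha.trans hab).le hc.le)
    refine ⟨B + (n + 1) * ((c - a) * K), fun f hf => ?_⟩
    obtain ⟨t, ht, htcard, htB⟩ := hB f hf
    exact (hK f hf).of_succ hab hbc ht htcard htB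

lemma DividedDiffBoundedOn.mono {n : ℕ} {f : ℝ → ℝ} {K K' : ℝ} (hf : DividedDiffBoundedOn n f I K)
    (hK : K ≤ K') : DividedDiffBoundedOn n f I K' := fun s hsI hs => (hf s hsI hs).trans hK

lemma UniformlyBoundedSomewhere.exists_forall_lt_dividedDiffBoundedOn
    (h : UniformlyBoundedSomewhere 𝓕 (Ioo lo hi)) {k : ℕ}
    (hmono : ∀ f ∈ 𝓕, DividedDiffNonnegOn k f (Ioo lo hi)) {a b : ℝ} (ha : lo < a)
    (hab : a < b) (hb : b < hi) :
    ∃ K, ∀ f ∈ 𝓕, ∀ n < k, DividedDiffBoundedOn n f (Ioo a b) K := by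
  have hexists : ∀ n, ∃ K, n < k → ∀ f ∈ 𝓕, DividedDiffBoundedOn n f (Ioo a b) K := fun n => by
    by_cases hn : n < k
    · obtain ⟨d, rfl⟩ := Nat.exists_eq_add_of_lt hn
      obtain ⟨K, hK⟩ := h.exists_dividedDiffBoundedOn_of_add hmono ha hab hb
      exact ⟨K, fun _ => hK⟩
    · exact ⟨0, fun hn' => absurd hn' hn⟩
  choose K hK using hexists
  obtain ⟨M, hM⟩ := ((Finset.range k).image K).exists_le
  exact ⟨M, fun f hf n hn =>
    (hK n hn f hf).mono (hM _ (Finset.mem_image_of_mem K (Finset.mem_range.2 hn)))⟩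

end Family

section Derivatives

variable {f : ℝ → ℝ} {I : Set ℝ} {K x : ℝ} {n k : ℕ}

lemma differentiableAt_of_lipschitzOnWith_slope {C : NNReal} (hI : I ∈ 𝓝 x)
    (hf : LipschitzOnWith C (slope f x) (I \ {x})) : DifferentiableAt ℝ f x := by
  obtain ⟨g, hg, hfg⟩ := hf.extend_real
  refine HasDerivAt.differentiableAt (f' := g x) (hasDerivAt_iff_tendsto_slope.2 ?_)
  refine ((hg.continuous.tendsto x).mono_left nhdsWithin_le_nhds).congr' ?_
  filter_upwards [sdiff_mem_nhdsWithin_compl hI {x}] with y hy using (hfg hy).symm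

lemma DividedDiffBoundedOn.differentiableAt (hf : DividedDiffBoundedOn 2 f I K) (hI : I ∈ 𝓝 x) :
    DifferentiableAt ℝ f x := by
  refine differentiableAt_of_lipschitzOnWith_slope (C := K.toNNReal) hI
    (.of_dist_le_mul fun y hy z hz => ?_)
  rcases eq_or_ne y z with rfl | hyz
  · simp
  have hbound : |dividedDiff f {z, y, x}| ≤ K := hf _
    (by simp [insert_subset_iff, hy.1, hz.1, mem_of_mem_nhds hI])
    (Finset.card_eq_three.2 ⟨z, y, x, hyz.symm, hz.2, hy.2, rfl⟩)
  rw [Real.dist_eq, Real.dist_eq, slope_sub_slope f hy.2 hz.2 hyz, abs_mul, mul_comm]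
  gcongr
  exact hbound.trans (Real.le_coe_toNNReal K)

lemma hasDerivAt_dividedDiff_image_add {f' : ℝ → ℝ} {s : Finset ℝ}
    (hf : ∀ x ∈ s, HasDerivAt f (f' x) x) :
    HasDerivAt (fun h => dividedDiff f (s.image (· + h))) (dividedDiff f' s) 0 := by
  simp_rw [dividedDiff_image_add_right]
  unfold dividedDiff
  refine HasDerivAt.fun_sum fun x hx => HasDerivAt.div_const ?_ _
  exact HasDerivAt.comp_const_add x 0 (by simpa using hf x hx)

lemma eventually_disjoint_image_add {G : Type*} [AddGroup G] [TopologicalSpace G]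
    [ContinuousAdd G] [T1Space G] [DecidableEq G] (s : Finset G) :
    ∀ᶠ h in 𝓝[≠] (0 : G), Disjoint s (s.image (· + h)) := by
  have hne : ∀ y ∈ s, ∀ z ∈ s, ∀ᶠ h in 𝓝[≠] (0 : G), z + h ≠ y := fun y _ z _ => by
    rcases eq_or_ne z y with rfl | hzy
    · filter_upwards [self_mem_nhdsWithin] with h hh using by simpa using hh
    · have hcont : ContinuousAt (z + ·) (0 : G) := by fun_prop
      exact nhdsWithin_le_nhds (hcont.eventually_ne (by simpa using hzy))
  simp only [← eventually_all_finset] at hne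
  filter_upwards [hne] with h hh
  simp only [Finset.disjoint_left, Finset.mem_image, not_exists, not_and]
  exact hh

lemma DividedDiffBoundedOn.deriv (hf : DividedDiffBoundedOn (n + 1) f I K) (hI : IsOpen I)
    (hdiff : ∀ x ∈ I, DifferentiableAt ℝ f x) :
    DividedDiffBoundedOn n (deriv f) I ((n + 1) * K) := by
  intro s hsI hs
  have hderiv := hasDerivAt_dividedDiff_image_add fun x hx => (hdiff x (hsI hx)).hasDerivAt
  have hmaps : ∀ᶠ h in 𝓝[≠] (0 : ℝ), ∀ x ∈ s, x + h ∈ I := by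
    refine (eventually_all_finset s).2 fun x hx => nhdsWithin_le_nhds ?_
    have hcont : ContinuousAt (x + ·) (0 : ℝ) := by fun_prop
    exact hcont (hI.mem_nhds (by simpa using hsI hx))
  refine le_of_tendsto hderiv.tendsto_slope.abs ?_
  filter_upwards [hmaps, eventually_disjoint_image_add s, self_mem_nhdsWithin] with h hhI hdisj hh
  have hmove := hf.abs_dividedDiff_image_sub_le (d := |h|) (add_left_injective h).injOn hdisj hsI
    (by rw [Finset.coe_image]; exact image_subset_iff.2 hhI) hs (by simp)
  rw [slope_def_field, sub_zero, abs_div, div_le_iff₀ (abs_pos.2 hh)]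
  simpa [mul_assoc, mul_comm K] using hmove

lemma dividedDiffBoundedOn_iteratedDeriv (hI : IsOpen I)
    (hf : ∀ n < k, DividedDiffBoundedOn n f I K) {i j : ℕ} (hi : i + 1 < k) (hij : i + j < k) :
    DividedDiffBoundedOn j (iteratedDeriv i f) I ((j + 1).ascFactorial i * K) := by
  induction i generalizing j with
  | zero => simpa using hf j (by simpa using hij)
  | succ i ih =>
    have hsecond := ih (j := 2) (by omega) (by omega)
    have hderiv := (ih (j := j + 1) (by omega) (by omega)).deriv hI
      fun x hx => hsecond.differentiableAt (hI.mem_nhds hx)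
    rw [iteratedDeriv_succ, Nat.ascFactorial_succ, ← Nat.succ_ascFactorial]
    simpa [mul_assoc] using hderiv

lemma DividedDiffBoundedOn.abs_le (hf : DividedDiffBoundedOn 0 f I K) (hx : x ∈ I) :
    |f x| ≤ K := by
  simpa [dividedDiff_singleton] using hf {x} (by simpa using hx) (by simp)

lemma DividedDiffBoundedOn.abs_slope_le (hf : DividedDiffBoundedOn 1 f I K) {y : ℝ} (hx : x ∈ I)
    (hy : y ∈ I) (hxy : x ≠ y) : |slope f x y| ≤ K := by
  rw [← dividedDiff_pair f hxy]
  exact hf _ (by simp [insert_subset_iff, hx, hy]) (Finset.card_pair hxy.symm)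

lemma DividedDiffBoundedOn.abs_le_of_tendsto (hf : DividedDiffBoundedOn 0 f I K) {l : Filter ℝ}
    [l.NeBot] (hI : I ∈ l) {L : ℝ} (hL : Tendsto f l (𝓝 L)) : |L| ≤ K :=
  le_of_tendsto hL.abs (mem_of_superset hI fun _ hx => hf.abs_le hx)

lemma DividedDiffBoundedOn.abs_leftDeriv_le (hf : DividedDiffBoundedOn 1 f I K) (hI : I ∈ 𝓝 x)
    {L : ℝ} (hL : HasDerivWithinAt f L (Iic x) x) : |L| ≤ K := by
  rw [hasDerivWithinAt_iff_tendsto_slope, Iic_sdiff_right] at hL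
  refine le_of_tendsto hL.abs ?_
  filter_upwards [mem_nhdsWithin_of_mem_nhds hI, self_mem_nhdsWithin] with y hy hyx
  exact hf.abs_slope_le (mem_of_mem_nhds hI) hy hyx.ne'

end Derivatives

section LeftTaylor

/-- `L` is the left derivative `f₋^{(k-1)}(0)`: the left limit of `f` at `0` when `k = 1`, and the
left derivative at `0` of `f^{(k-2)}` when `2 ≤ k`. -/
def HasLeftDerivAtZero (k : ℕ) (f : ℝ → ℝ) (L : ℝ) : Prop :=
  if k = 1 then Tendsto f (𝓝[<] 0) (𝓝 L)
  else HasDerivWithinAt (iteratedDeriv (k - 2) f) L (Iic 0) 0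

/-- The Taylor polynomial `T_{k-1}(f, x)` at `0`, with the number `L` in the role of the top
derivative `f₋^{(k-1)}(0)`. -/
def leftTaylor (k : ℕ) (f : ℝ → ℝ) (L x : ℝ) : ℝ :=
  L * x ^ (k - 1) / (Nat.factorial (k - 1) : ℝ) +
    ∑ i ∈ Finset.range (k - 1), iteratedDeriv i f 0 * x ^ i / (Nat.factorial i : ℝ)

variable {f : ℝ → ℝ} {I : Set ℝ} {K L x : ℝ} {k : ℕ}

lemma abs_iteratedDeriv_le_of_dividedDiffBoundedOn (hI : IsOpen I)
    (hf : ∀ n < k, DividedDiffBoundedOn n f I K) {i : ℕ} (hi : i + 1 < k) (hx : x ∈ I) :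
    |iteratedDeriv i f x| ≤ i.factorial * K := by
  simpa [Nat.one_ascFactorial] using
    (dividedDiffBoundedOn_iteratedDeriv hI hf (j := 0) hi (by omega)).abs_le hx

lemma HasLeftDerivAtZero.abs_le_factorial_mul (hL : HasLeftDerivAtZero k f L) (hk : 1 ≤ k)
    (hI : IsOpen I) (h0 : 0 ∈ I) (hf : ∀ n < k, DividedDiffBoundedOn n f I K) :
    |L| ≤ (k - 1).factorial * K := by
  unfold HasLeftDerivAtZero at hL
  split_ifs at hL with hk1
  · subst hk1
    simpa using (hf 0 one_pos).abs_le_of_tendsto (mem_nhdsWithin_of_mem_nhds (hI.mem_nhds h0)) hL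
  · obtain ⟨i, rfl⟩ : ∃ i, k = i + 2 := ⟨k - 2, by omega⟩
    have hfact : Nat.ascFactorial 2 i = (i + 1).factorial := by
      rw [← Nat.one_ascFactorial, Nat.ascFactorial_succ, ← Nat.succ_ascFactorial, one_mul]
    have hbound := dividedDiffBoundedOn_iteratedDeriv hI hf (i := i) (j := 1) (by omega) (by omega)
    simpa [hfact] using hbound.abs_leftDeriv_le (hI.mem_nhds h0) hL

lemma abs_mul_pow_div_factorial_le {a : ℝ} {i : ℕ} (ha : |a| ≤ i.factorial * K) (hx : |x| ≤ 1) :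
    |a * x ^ i / (i.factorial : ℝ)| ≤ K := by
  rw [abs_div, abs_mul, abs_pow, Nat.abs_cast, div_le_iff₀ (by positivity), mul_comm K]
  exact (mul_le_of_le_one_right (abs_nonneg a) (pow_le_one₀ (abs_nonneg x) hx)).trans ha

lemma HasLeftDerivAtZero.abs_leftTaylor_le (hL : HasLeftDerivAtZero k f L) (hk : 1 ≤ k)
    (hI : IsOpen I) (h0 : 0 ∈ I) (hf : ∀ n < k, DividedDiffBoundedOn n f I K) (hx : |x| ≤ 1) :
    |leftTaylor k f L x| ≤ k * K := by
  have hsum : |∑ i ∈ Finset.range (k - 1), iteratedDeriv i f 0 * x ^ i / (i.factorial : ℝ)| ≤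
      ∑ _i ∈ Finset.range (k - 1), K :=
    (Finset.abs_sum_le_sum_abs _ _).trans <| Finset.sum_le_sum fun i hi =>
      abs_mul_pow_div_factorial_le (abs_iteratedDeriv_le_of_dividedDiffBoundedOn hI hf
        (Nat.add_lt_of_lt_sub (Finset.mem_range.1 hi)) h0) hx
  calc |leftTaylor k f L x| ≤ K + ∑ _i ∈ Finset.range (k - 1), K :=
        (abs_add_le _ _).trans
          (add_le_add (abs_mul_pow_div_factorial_le (hL.abs_le_factorial_mul hk hI h0 hf) hx) hsum)
    _ = k * K := by
        rw [Finset.sum_const, Finset.card_range, nsmul_eq_mul, Nat.cast_sub hk]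
        ring

end LeftTaylor

section Weight

lemma exists_norm_le_of_eLpNorm_restrict_le_one {α E : Type*} [MeasurableSpace α]
    [NormedAddCommGroup E] {μ : Measure α} {s : Set α} (hs : MeasurableSet s) (hμs : μ s ≠ 0)
    {p : ℝ≥0∞} (hp : p ≠ 0) :
    ∃ c : ℝ, ∀ g : α → E, eLpNorm g p (μ.restrict s) ≤ 1 → ∃ x ∈ s, ‖g x‖ ≤ c := by
  have hfactor : μ s ^ (1 / p.toReal) ≠ 0 := by simp [ENNReal.rpow_eq_zero_iff, hμs]
  obtain ⟨c, hc⟩ := ENNReal.exists_nat_mul_gt hfactor ENNReal.one_ne_top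
  refine ⟨c, fun g hg => ?_⟩
  by_contra! hlt
  have hmono : eLpNorm (fun _ => (c : ℝ)) p (μ.restrict s) ≤ eLpNorm g p (μ.restrict s) :=
    eLpNorm_mono_ae <| (ae_restrict_iff' hs).2 <| .of_forall fun x hx => by
      simpa using (hlt x hx).le
  rw [eLpNorm_const _ hp (by simpa using hμs), Measure.restrict_apply_univ, Real.enorm_natCast]
    at hmono
  exact (hc.trans_le (hmono.trans hg)).false

variable {w : ℝ → ℝ} {p : ℝ≥0∞} {lo hi : ℝ}

lemma uniformlyBoundedSomewhere_of_LpOn_le_one (hp : p ≠ 0) (hw : ContinuousOn w (Ioo lo hi))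
    (hpos : ∀ x ∈ Ioo lo hi, 0 < w x) :
    UniformlyBoundedSomewhere {f | LpOn (fun x => w x * f x) p lo hi ≤ 1} (Ioo lo hi) := by
  intro u v huv hI
  obtain ⟨m, hum, hmv⟩ := exists_between huv
  obtain ⟨m', hmm', hmv'⟩ := exists_between hmv
  have hsub : Icc m m' ⊆ Ioo u v := Icc_subset_Ioo hum hmv'
  obtain ⟨y, hy, hmin⟩ := isCompact_Icc.exists_isMinOn (nonempty_Icc.2 hmm'.le)
    (hw.mono (hsub.trans hI))
  have hwy : 0 < w y := hpos y (hI (hsub hy))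
  obtain ⟨c, hc⟩ := exists_norm_le_of_eLpNorm_restrict_le_one (E := ℝ) (μ := volume)
    (measurableSet_Icc : MeasurableSet (Icc m m')) (by simpa using hmm') hp
  refine ⟨c / w y, fun f hf => ?_⟩
  have hrestrict : volume.restrict (Icc m m') ≤ volume.restrict (Icc lo hi) :=
    Measure.restrict_mono ((hsub.trans hI).trans Ioo_subset_Icc_self) le_rfl
  obtain ⟨x, hx, hxc⟩ := hc _ ((eLpNorm_mono_measure _ hrestrict).trans hf)
  refine ⟨x, hsub hx, (le_div_iff₀ hwy).2 ?_⟩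
  calc |f x| * w y ≤ |f x| * w x := by gcongr; exact hmin hx
    _ = ‖w x * f x‖ := by
      rw [Real.norm_eq_abs, abs_mul, abs_of_pos (hpos x (hI (hsub hx))), mul_comm]
    _ ≤ c := hxc

lemma LpOn_mul_inv_mul_le_one {f : ℝ → ℝ} {M : ℝ}
    (hM : LpOn (fun x => w x * f x) p lo hi < ENNReal.ofReal M) :
    LpOn (fun x => w x * (M⁻¹ * f x)) p lo hi ≤ 1 := by
  have hMpos : 0 < M := ENNReal.ofReal_pos.1 (pos_of_gt hM)
  have hnorm (x : ℝ) : ‖w x * (M⁻¹ * f x)‖ ≤ M⁻¹ * ‖w x * f x‖ := by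
    rw [mul_left_comm, norm_mul, Real.norm_of_nonneg (inv_nonneg.2 hMpos.le)]
  calc LpOn (fun x => w x * (M⁻¹ * f x)) p lo hi
      ≤ ENNReal.ofReal M⁻¹ * LpOn (fun x => w x * f x) p lo hi :=
        eLpNorm_le_mul_eLpNorm_of_ae_le_mul (.of_forall hnorm) p
    _ ≤ ENNReal.ofReal M⁻¹ * ENNReal.ofReal M := by gcongr
    _ = 1 := by rw [← ENNReal.ofReal_mul (by positivity), inv_mul_cancel₀ hMpos.ne',
      ENNReal.ofReal_one]

-- Normalising by an arbitrary `M` above the norm, rather than by the norm itself, also covers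
-- functions of norm zero.
lemma exists_dividedDiffBoundedOn_mul_LpOn (k : ℕ) (hp : p ≠ 0) (hw : ContinuousOn w (Ioo lo hi))
    (hpos : ∀ x ∈ Ioo lo hi, 0 < w x) {a b : ℝ} (ha : lo < a) (hab : a < b) (hb : b < hi) :
    ∃ K, ∀ f, DividedDiffNonnegOn k f (Ioo lo hi) → LpOn (fun x => w x * f x) p lo hi ≠ ⊤ →
      ∀ n < k, DividedDiffBoundedOn n f (Ioo a b)
        (K * (LpOn (fun x => w x * f x) p lo hi).toReal) := by
  let 𝓕 : Set (ℝ → ℝ) :=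
    {f | LpOn (fun x => w x * f x) p lo hi ≤ 1} ∩ {f | DividedDiffNonnegOn k f (Ioo lo hi)}
  have hsomewhere : UniformlyBoundedSomewhere 𝓕 (Ioo lo hi) := fun u v huv hI =>
    (uniformlyBoundedSomewhere_of_LpOn_le_one hp hw hpos u v huv hI).imp fun _ hc f hf => hc f hf.1
  obtain ⟨K, hK⟩ := hsomewhere.exists_forall_lt_dividedDiffBoundedOn (fun _ hf => hf.2) ha hab hb
  refine ⟨K, fun f hf hfin n hn s hsI hs => ?_⟩
  have hscaled : ∀ M > (LpOn (fun x => w x * f x) p lo hi).toReal,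
      |dividedDiff f s| ≤ K * M := fun M hM => by
    have hMpos : 0 < M := ENNReal.toReal_nonneg.trans_lt hM
    have hmem : (fun x => M⁻¹ * f x) ∈ 𝓕 :=
      ⟨LpOn_mul_inv_mul_le_one ((ENNReal.lt_ofReal_iff_toReal_lt hfin).2 hM),
        hf.const_mul (inv_nonneg.2 hMpos.le)⟩
    have hbound := hK _ hmem n hn s hsI hs
    rwa [dividedDiff_const_mul, abs_mul, abs_of_pos (inv_pos.2 hMpos), inv_mul_le_iff₀ hMpos,
      mul_comm] at hbound
  exact ge_of_tendsto (x := 𝓝[>] (LpOn (fun x => w x * f x) p lo hi).toReal)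
    (continuous_const_mul K).continuousWithinAt (eventually_mem_nhdsWithin.mono hscaled)

end Weight

section Jacobi

variable {α β : ℝ} {p : ℝ≥0∞}

lemma continuousOn_jacobi (α β : ℝ) : ContinuousOn (jacobi α β) (Ioo (-1) 1) :=
  .mul (.rpow_const (by fun_prop) fun _ hx => .inl (neg_lt_iff_pos_add'.1 hx.1).ne')
    (.rpow_const (by fun_prop) fun _ hx => .inl (sub_pos.2 hx.2).ne')

lemma jacobi_pos {x : ℝ} (hx : x ∈ Ioo (-1) 1) : 0 < jacobi α β x :=
  mul_pos (Real.rpow_pos_of_pos (neg_lt_iff_pos_add'.1 hx.1) α)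
    (Real.rpow_pos_of_pos (sub_pos.2 hx.2) β)

lemma memLp_rpow_of_mem_Jset (hp : p ≠ 0) (hα : α ∈ Jset p) :
    MemLp (fun x : ℝ => x ^ α) p (volume.restrict (Icc 0 2)) := by
  have hmeas : AEStronglyMeasurable (fun x : ℝ => x ^ α) (volume.restrict (Icc 0 2)) :=
    (measurable_id.pow_const α).aestronglyMeasurable
  rcases eq_or_ne p ∞ with rfl | hptop
  · have hα0 : 0 ≤ α := by simpa [Jset] using hα
    refine memLp_top_of_bound hmeas (2 ^ α) (ae_restrict_of_forall_mem measurableSet_Icc ?_)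
    intro x hx
    rw [Real.norm_of_nonneg (Real.rpow_nonneg hx.1 α)]
    exact Real.rpow_le_rpow hx.1 hx.2 hα0
  · have hpos : 0 < p.toReal := ENNReal.toReal_pos hp hptop
    have hexp : -1 < α * p.toReal := by
      rw [Jset, if_neg hptop, mem_Ioi, div_lt_iff₀ hpos] at hα
      exact hα
    have hint : IntegrableOn (fun x : ℝ => x ^ (α * p.toReal)) (Icc 0 2) :=
      (intervalIntegrable_iff_integrableOn_Icc_of_le zero_le_two).1
        (intervalIntegral.intervalIntegrable_rpow' hexp)
    rw [← integrable_norm_rpow_iff hmeas hp hptop]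
    refine hint.congr_fun (fun x hx => ?_) measurableSet_Icc
    simp only [Real.norm_of_nonneg (Real.rpow_nonneg hx.1 α), Real.rpow_mul hx.1]

lemma memLp_one_add_rpow (hp : p ≠ 0) (hα : α ∈ Jset p) :
    MemLp (fun x : ℝ => (1 + x) ^ α) p (volume.restrict (Icc (-1) 1)) := by
  have hshift := (measurePreserving_add_left (volume : Measure ℝ) 1).restrict_preimage
    (measurableSet_Icc : MeasurableSet (Icc (0 : ℝ) 2))
  rw [preimage_const_add_Icc, zero_sub, show (2 - 1 : ℝ) = 1 by norm_num] at hshift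
  exact (memLp_rpow_of_mem_Jset hp hα).comp_measurePreserving hshift

lemma memLp_one_sub_rpow (hp : p ≠ 0) (hβ : β ∈ Jset p) :
    MemLp (fun x : ℝ => (1 - x) ^ β) p (volume.restrict (Icc (-1) 1)) := by
  have hreflect := (Measure.measurePreserving_neg (volume : Measure ℝ)).restrict_preimage
    (measurableSet_Icc : MeasurableSet (Icc (-1 : ℝ) 1))
  simp only [neg_preimage, neg_Icc, neg_neg] at hreflect
  simpa only [Function.comp_def, ← sub_eq_add_neg] using
    (memLp_one_add_rpow hp hβ).comp_measurePreserving hreflect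

lemma rpow_le_two_rpow_abs {x : ℝ} (hx : x ∈ Icc 1 2) (γ : ℝ) : x ^ γ ≤ 2 ^ |γ| :=
  (Real.rpow_le_rpow_of_exponent_le hx.1 (le_abs_self γ)).trans
    (Real.rpow_le_rpow (zero_le_one.trans hx.1) hx.2 (abs_nonneg γ))

-- At each point one of the factors `1 + x`, `1 - x` lies in `[1, 2]`.
lemma norm_jacobi_le {x : ℝ} (hx : x ∈ Icc (-1) 1) :
    ‖jacobi α β x‖ ≤ (2 ^ |α| + 2 ^ |β|) * ‖(1 + x) ^ α + (1 - x) ^ β‖ := by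
  have hleft : 0 ≤ (1 + x) ^ α := Real.rpow_nonneg (neg_le_iff_add_nonneg'.1 hx.1) α
  have hright : 0 ≤ (1 - x) ^ β := Real.rpow_nonneg (sub_nonneg.2 hx.2) β
  have hα : (0 : ℝ) ≤ 2 ^ |α| := by positivity
  have hβ : (0 : ℝ) ≤ 2 ^ |β| := by positivity
  rw [jacobi, Real.norm_of_nonneg (mul_nonneg hleft hright),
    Real.norm_of_nonneg (add_nonneg hleft hright)]
  rcases le_total x 0 with h | h
  · have hbound := rpow_le_two_rpow_abs (x := 1 - x) ⟨by linarith, by linarith [hx.1]⟩ β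
    nlinarith [mul_nonneg hleft hα, mul_nonneg hright hα, mul_nonneg hright hβ]
  · have hbound := rpow_le_two_rpow_abs (x := 1 + x) ⟨by linarith, by linarith [hx.2]⟩ α
    nlinarith [mul_nonneg hleft hα, mul_nonneg hleft hβ, mul_nonneg hright hβ]

lemma LpOn_jacobi_ne_top (hp : p ≠ 0) (hα : α ∈ Jset p) (hβ : β ∈ Jset p) :
    LpOn (jacobi α β) p (-1) 1 ≠ ⊤ := by
  have hsum := (memLp_one_add_rpow hp hα).add (memLp_one_sub_rpow hp hβ)
  have hle := ae_restrict_of_forall_mem (μ := volume) measurableSet_Icc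
    fun x hx => norm_jacobi_le (α := α) (β := β) (x := x) hx
  exact ne_top_of_le_ne_top (ENNReal.mul_ne_top ENNReal.ofReal_ne_top hsum.eLpNorm_ne_top)
    (eLpNorm_le_mul_eLpNorm_of_ae_le_mul hle p)

end Jacobi

lemma HasLeftDerivAtZero.LpOn_mul_leftTaylor_le {k : ℕ} {f : ℝ → ℝ} {I : Set ℝ} {K L : ℝ}
    (hL : HasLeftDerivAtZero k f L) (hk : 1 ≤ k) (hI : IsOpen I) (h0 : 0 ∈ I)
    (hf : ∀ n < k, DividedDiffBoundedOn n f I K) (w : ℝ → ℝ) (p : ℝ≥0∞) :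
    LpOn (fun x => w x * leftTaylor k f L x) p (-1) 1 ≤
      ENNReal.ofReal (k * K) * LpOn w p (-1) 1 := by
  refine eLpNorm_le_mul_eLpNorm_of_ae_le_mul (ae_restrict_of_forall_mem measurableSet_Icc ?_) p
  intro x hx
  rw [norm_mul, mul_comm]
  exact mul_le_mul_of_nonneg_right (hL.abs_leftTaylor_le hk hI h0 hf (abs_le.2 hx)) (norm_nonneg _)

theorem statement9_general (k : ℕ) (hk : 1 ≤ k) {p : ℝ≥0∞} (hp : p ≠ 0) {w : ℝ → ℝ}
    (hw : ContinuousOn w (Ioo (-1) 1)) (hpos : ∀ x ∈ Ioo (-1) 1, 0 < w x)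
    (hfin : LpOn w p (-1) 1 ≠ ⊤) :
    ∃ c > (0 : ℝ), ∀ f ∈ MSet k, ∀ L, HasLeftDerivAtZero k f L →
      LpOn (fun x => w x * leftTaylor k f L x) p (-1) 1 ≤
        ENNReal.ofReal c * LpOn (fun x => w x * f x) p (-1) 1 := by
  obtain ⟨K, hK⟩ := exists_dividedDiffBoundedOn_mul_LpOn k hp hw hpos (a := -1 / 2) (b := 1 / 2)
    (by norm_num) (by norm_num) (by norm_num)
  refine ⟨max 1 (k * K * (LpOn w p (-1) 1).toReal), by positivity, fun f hf L hL => ?_⟩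
  set N := LpOn (fun x => w x * f x) p (-1) 1
  rcases eq_or_ne N ⊤ with htop | htop
  · rw [htop, ENNReal.mul_top (by simp)]
    exact le_top
  calc LpOn (fun x => w x * leftTaylor k f L x) p (-1) 1
      ≤ ENNReal.ofReal (k * (K * N.toReal)) * LpOn w p (-1) 1 :=
        hL.LpOn_mul_leftTaylor_le hk isOpen_Ioo (by norm_num)
          (hK f (kMonotoneOn.dividedDiffNonnegOn hf) htop) w p
    _ = ENNReal.ofReal (k * K * (LpOn w p (-1) 1).toReal) * N := by
        nth_rw 1 [← ENNReal.ofReal_toReal hfin]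
        nth_rw 2 [← ENNReal.ofReal_toReal htop]
        rw [← ENNReal.ofReal_mul' ENNReal.toReal_nonneg,
          ← ENNReal.ofReal_mul' ENNReal.toReal_nonneg]
        ring_nf
    _ ≤ ENNReal.ofReal (max 1 (k * K * (LpOn w p (-1) 1).toReal)) * N := by
        gcongr
        exact le_max_right _ _

theorem statement9 (k : ℕ) (hk : 1 ≤ k) (p : ℝ≥0∞) (hp : 1 ≤ p) (α β : ℝ)
    (hα : α ∈ Jset p) (hβ : β ∈ Jset p) :
    ∃ c > (0 : ℝ), ∀ f : ℝ → ℝ, f ∈ MSet k ∩ WSet p α β → ∀ L : ℝ,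
      (if k = 1 then Filter.Tendsto f (nhdsWithin 0 (Iio 0)) (nhds L)
       else HasDerivWithinAt (iteratedDeriv (k - 2) f) L (Iic 0) 0) →
      LpOn (fun x => jacobi α β x *
          (L * x ^ (k - 1) / (Nat.factorial (k - 1) : ℝ) +
            ∑ i ∈ Finset.range (k - 1), iteratedDeriv i f 0 * x ^ i / (Nat.factorial i : ℝ)))
          p (-1) 1 ≤
        ENNReal.ofReal c * LpOn (fun x => jacobi α β x * f x) p (-1) 1 := by
  have hp0 : p ≠ 0 := (zero_lt_one.trans_le hp).ne'
  obtain ⟨c, hc, hbound⟩ := statement9_general k hk hp0 (continuousOn_jacobi α β)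
    (fun _ => jacobi_pos) (LpOn_jacobi_ne_top hp0 hα hβ)
  exact ⟨c, hc, fun f hf => hbound f hf.1⟩
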